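/- For every integer d ≥ 3, the vanishing ideal of the affine cone C_IG ⊆ ℂ^{d+1} over the inverse Gaussian moment parameterization equals the ideal I = I_3(H) generated by the 3×3 minors of H; that is, a polynomial f ∈ ℂ[m_0,…,m_d] vanishes at every point of C_IG if and only if f ∈ I. -/

import Mathlib

open MvPolynomial

/-- The `3 × d` matrix `H` of the inverse Gaussian moment variety: its first column is
`(m₀², 0, m₁²)ᵀ`, and its `c`-th column, for `2 ≤ c ≤ d`, is
`(m_{c-2}, (2c-3)·m_{c-1}, m_c)ᵀ`.  Columns are indexed by `Fin d`, with `c : Fin d`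
corresponding to the paper's column `c + 1`. -/
noncomputable def invGaussMatrix (d : ℕ) :
    Matrix (Fin 3) (Fin d) (MvPolynomial (Fin (d + 1)) ℂ) :=
  Matrix.of fun r c =>
    if c.val = 0 then
      ![X ⟨0, by omega⟩ ^ 2, 0, X ⟨1, by have := c.isLt; omega⟩ ^ 2] r
    else
      ![X ⟨c.val - 1, by have := c.isLt; omega⟩,
        C (2 * (c.val : ℂ) - 1) * X ⟨c.val, by have := c.isLt; omega⟩,
        X ⟨c.val + 1, by have := c.isLt; omega⟩] r

/-- The ideal `I₃(H)` generated by all `3 × 3` minors of `H`, i.e. determinants of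
submatrices obtained by choosing `3` of the `d` columns. -/
noncomputable def invGaussIdeal (d : ℕ) : Ideal (MvPolynomial (Fin (d + 1)) ℂ) :=
  Ideal.span
    { p | ∃ s : Fin 3 → Fin d, StrictMono s ∧ p = ((invGaussMatrix d).submatrix id s).det }

/-- The inverse Gaussian moment sequence: `m₀ = 1`, `m₁ = μ`, and
`mᵢ = (2i-3)·ν·μ²·m_{i-1} + μ²·m_{i-2}` for `i ≥ 2` (here `ν` plays the role of `1/λ`). -/
noncomputable def invGaussMoment (μ ν : ℂ) : ℕ → ℂ
  | 0 => 1
  | 1 => μ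
  | n + 2 => (2 * (n : ℂ) + 1) * ν * μ ^ 2 * invGaussMoment μ ν (n + 1)
      + μ ^ 2 * invGaussMoment μ ν n

/-!
On the cone, put `x = νμ`. Then `m_k = t μ ^ k p_k(x)` for polynomials `p_k` obeying a three-term
recurrence, and `(μ ^ 2, μ x, -1)` annihilates the columns of `H`, so `I₃(H)` lies in the vanishing
ideal `K`. For the converse, compare the quotients of `S = ℂ[m₀, …, m_d]` by both ideals as modules
over `A = ℂ[m₀, m_{d-1}, m_d]`.

Straightening with the minors of `H` trades a monomial for monomials whose indices are spread
further apart. The process stops at monomials that are an element of `A` times one of `(d - 1) ^ 2`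
standard monomials, so these generate `S / I₃(H)` over `A`.

In `S / K` there are `(d - 1) ^ 2` elements independent over `A`, namely the powers
`1, x, …, x ^ ((d - 1) ^ 2 - 1)` with denominators cleared. Indeed, if `m₀ ^ i m_{d-1} ^ j m_d ^ k`
and `m₀ ^ i' m_{d-1} ^ j' m_d ^ k'` have the same degree in `t` and in `μ`, then `d - 1` divides
`k - k'`. As `p_{d-1}` and `p_d` are coprime, a linear relation among the powers of `x` would force
`p_d ^ (d - 1)`, which has degree `(d - 1) ^ 2`, to divide a nonzero polynomial of smaller degree.

So `A ^ ((d - 1) ^ 2)` maps onto `S / I₃(H)`, and its map to `S / K` has a kernel of rank `0`, which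
is `0` because `A` is a domain. Hence `I₃(H) = K`.
-/

namespace InvGauss

section Multiset

variable {α M : Type*} {s : Multiset α}

theorem exists_le_card_eq {n : ℕ} (h : n ≤ s.card) : ∃ t ≤ s, t.card = n := by
  induction s using Quotient.inductionOn with
  | h l => exact ⟨l.take n, (l.take_sublist n).subperm, by simpa using h⟩

theorem exists_option_elim_eq_prod_map [CommMonoid M] (f : α → M) (hs : s.card ≤ 1) :
    ∃ o : Option α, o.elim 1 f = (s.map f).prod := by
  rcases Nat.le_one_iff_eq_zero_or_eq_one.1 hs with h | h
  · rw [Multiset.card_eq_zero.1 h]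
    exact ⟨none, by simp⟩
  · obtain ⟨a, rfl⟩ := Multiset.card_eq_one.1 h
    exact ⟨some a, by simp⟩

theorem exists_sym2_mul_eq_prod_map [CommMonoid M] (f : α → M) (hs : s.card ≤ 2) :
    ∃ z : Sym2 (Option α), (z.map (·.elim 1 f)).mul = (s.map f).prod := by
  obtain h | h := Nat.le_succ_iff.1 hs
  · obtain ⟨o, ho⟩ := exists_option_elim_eq_prod_map f h
    exact ⟨s(o, none), by simp [ho]⟩
  · obtain ⟨a, b, rfl⟩ := Multiset.card_eq_two.1 h
    exact ⟨s(some a, some b), by simp⟩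

end Multiset

section LinearAlgebra

variable {R : Type*} [CommRing R] [IsDomain R]

theorem injective_of_linearIndependent_comp {V N ι : Type*} [AddCommGroup V] [Module R V]
    [Module.IsTorsionFree R V] [Module.Finite R V] [AddCommGroup N] [Module R N] [Fintype ι]
    (g : V →ₗ[R] N) {e : ι → V} (he : LinearIndependent R (g ∘ e))
    (hcard : Module.finrank R V ≤ Fintype.card ι) : Function.Injective g := by
  rw [injective_iff_map_eq_zero]
  intro x hx
  by_contra hne
  have hx_indep : LinearIndependent R fun _ : Unit => (⟨x, hx⟩ : LinearMap.ker g) :=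
    LinearIndependent.of_subsingleton () (by simpa [Subtype.ext_iff] using hne)
  have he_indep : LinearIndependent R ((LinearMap.ker g).mkQ ∘ e) :=
    LinearIndependent.of_comp ((LinearMap.ker g).liftQ g le_rfl) he
  have hsum := (hx_indep.sumElim_of_quotient e he_indep).fintype_card_le_finrank
  rw [Fintype.card_sum, Fintype.card_unit] at hsum
  omega

theorem eq_of_span_sup_eq_top_of_card_le {M ι κ : Type*} [AddCommGroup M]
    [Module R M] [Fintype ι] [Fintype κ] {b : κ → M} {e : ι → M} {J K : Submodule R M}
    (hb : Submodule.span R (Set.range b) ⊔ J = ⊤)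
    (he : ∀ a : ι → R, ∑ i, a i • e i ∈ K → a = 0)
    (hcard : Fintype.card κ ≤ Fintype.card ι) (hJK : J ≤ K) : J = K := by
  have he_indep : LinearIndependent R (K.mkQ ∘ e) := by
    refine Fintype.linearIndependent_iff.2 fun a ha => congrFun (he a ?_)
    rw [← Submodule.ker_mkQ K, LinearMap.mem_ker, map_sum, ← ha]
    simp only [map_smul, Function.comp_apply]
  have hdecomp (x : M) : ∃ a : κ → R, ∃ y ∈ J, Fintype.linearCombination R b a + y = x := by
    obtain ⟨z, hz, y, hy, hzy⟩ := Submodule.mem_sup.1 (hb ▸ Submodule.mem_top (x := x))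
    rw [← Fintype.range_linearCombination] at hz
    obtain ⟨a, rfl⟩ := hz
    exact ⟨a, y, hy, hzy⟩
  have hmkQ {a : κ → R} {x y : M} (hy : y ∈ J) (h : Fintype.linearCombination R b a + y = x) :
      (K.mkQ ∘ₗ Fintype.linearCombination R b) a = K.mkQ x := by
    simp [← h, (Submodule.Quotient.mk_eq_zero K).2 (hJK hy)]
  choose coeffs rem hrem hcoeffs using fun i => hdecomp (e i)
  have hinj : Function.Injective (K.mkQ ∘ₗ Fintype.linearCombination R b) := by
    have hcomp : (K.mkQ ∘ₗ Fintype.linearCombination R b) ∘ coeffs = K.mkQ ∘ e :=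
      funext fun i => hmkQ (hrem i) (hcoeffs i)
    exact injective_of_linearIndependent_comp _ (hcomp ▸ he_indep) (by simpa using hcard)
  refine le_antisymm hJK fun x hx => ?_
  obtain ⟨a, y, hy, h⟩ := hdecomp x
  have ha : a = 0 := hinj <| by
    rw [hmkQ hy h, map_zero, Submodule.mkQ_apply, (Submodule.Quotient.mk_eq_zero K).2 hx]
  rwa [← h, ha, map_zero, zero_add]

end LinearAlgebra

section Toric

variable {R : Type*} [CommRing R]

/-- The `R`-algebra map `R[y₀, y₁, y₂] → R[t, μ]` sending `y₀, y₁, y₂` to `t`, `t μ ^ a P` and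
`t μ ^ b Q`. -/
noncomputable def weightedMonomialMap (a b : ℕ) (P Q : R) :
    MvPolynomial (Fin 3) R →ₐ[R] MvPolynomial (Fin 2) R :=
  aeval ![X 0, X 0 * X 1 ^ a * C P, X 0 * X 1 ^ b * C Q]

/-- The exponent of `t` and `μ` in the image of `y ^ m` under `weightedMonomialMap`. -/
noncomputable def weightedExponent (a b : ℕ) (m : Fin 3 →₀ ℕ) : Fin 2 →₀ ℕ :=
  Finsupp.single 0 (m 0 + m 1 + m 2) + Finsupp.single 1 (a * m 1 + b * m 2)

theorem weightedMonomialMap_monomial (a b : ℕ) (P Q : R) (m : Fin 3 →₀ ℕ) (r : R) :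
    weightedMonomialMap a b P Q (monomial m r) =
      monomial (weightedExponent a b m) (r * (P ^ m 1 * Q ^ m 2)) := by
  rw [weightedMonomialMap, aeval_monomial, Finsupp.prod_fintype _ _ (by simp),
    Fin.prod_univ_three, weightedExponent, monomial_eq,
    Finsupp.prod_add_index' (by simp) (by simp [pow_add])]
  simp only [algebraMap_eq, Matrix.cons_val, Finsupp.prod_single_index, pow_zero]
  rw [C_mul, C_mul, C_pow, C_pow]
  ring

theorem coeff_weightedMonomialMap (a b : ℕ) (P Q : R) (g : MvPolynomial (Fin 3) R)
    (w : Fin 2 →₀ ℕ) :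
    coeff w (weightedMonomialMap a b P Q g) =
      ∑ m ∈ g.support with weightedExponent a b m = w, coeff m g * (P ^ m 1 * Q ^ m 2) := by
  conv_lhs => rw [g.as_sum, map_sum, coeff_sum]
  simp only [weightedMonomialMap_monomial, coeff_monomial, Finset.sum_filter]

theorem eq_or_add_le_of_weightedExponent_eq {a b : ℕ} (hab : a.Coprime b) {m s : Fin 3 →₀ ℕ}
    (h : weightedExponent a b m = weightedExponent a b s) (hle : s 2 ≤ m 2) :
    m = s ∨ s 2 + a ≤ m 2 := by
  have hdeg : m 0 + m 1 + m 2 = s 0 + s 1 + s 2 := by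
    simpa [weightedExponent] using DFunLike.congr_fun h 0
  have hweight : a * m 1 + b * m 2 = a * s 1 + b * s 2 := by
    simpa [weightedExponent] using DFunLike.congr_fun h 1
  obtain ⟨k, hk⟩ := Nat.exists_eq_add_of_le hle
  rcases Nat.eq_zero_or_pos k with rfl | hpos
  · rcases Nat.eq_zero_or_pos a with rfl | ha
    · exact .inr (by omega)
    · left
      have h1 : m 1 = s 1 := by
        rw [hk, add_zero, add_left_inj] at hweight
        exact Nat.eq_of_mul_eq_mul_left ha hweight
      have h0 : m 0 = s 0 := by omega
      ext i
      fin_cases i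
      exacts [h0, h1, hk]
  · right
    have hdvd : a ∣ b * k := by
      refine (Nat.dvd_add_right (Dvd.intro (m 1) rfl)).1 ⟨s 1, ?_⟩
      rw [hk, mul_add] at hweight
      omega
    rw [hk]
    exact Nat.add_le_add_left (Nat.le_of_dvd hpos (hab.dvd_of_dvd_mul_left hdvd)) _

/-- In the lowest power of `y₂` that occurs, the terms of equal weight cancel only if the
coefficient absorbs `Q ^ a`: competing terms carry at least `a` more factors `Q`. -/
theorem exists_pow_dvd_coeff_of_weightedMonomialMap_eq_zero [IsDomain R] {a b : ℕ}
    (hab : a.Coprime b) {P Q : R} (hPQ : IsCoprime P Q) (hQ : Q ≠ 0) {g : MvPolynomial (Fin 3) R}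
    (hg : g ≠ 0) (h : weightedMonomialMap a b P Q g = 0) :
    ∃ m ∈ g.support, Q ^ a ∣ coeff m g := by
  obtain ⟨s, hs, hmin⟩ := g.support.exists_min_image (fun m => m 2) (support_nonempty.2 hg)
  refine ⟨s, hs, ?_⟩
  have hsum := coeff_weightedMonomialMap a b P Q g (weightedExponent a b s)
  rw [h, coeff_zero, ← Finset.add_sum_erase _ _ (a := s) (by simp [mem_support_iff.1 hs])] at hsum
  have hdvd : Q ^ (s 2 + a) ∣ coeff s g * (P ^ s 1 * Q ^ s 2) := by
    rw [eq_neg_of_add_eq_zero_left hsum.symm, dvd_neg]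
    refine Finset.dvd_sum fun m hm => ?_
    simp only [Finset.mem_erase, Finset.mem_filter] at hm
    obtain ⟨hne, hmem, hexp⟩ := hm
    have hle := (eq_or_add_le_of_weightedExponent_eq hab hexp (hmin m hmem)).resolve_left hne
    exact (pow_dvd_pow Q hle).trans (Dvd.intro_left _ (mul_assoc _ _ _))
  rw [pow_add, ← mul_assoc, mul_comm _ (Q ^ s 2), mul_dvd_mul_iff_left (pow_ne_zero _ hQ)] at hdvd
  exact hPQ.symm.pow.dvd_of_dvd_mul_right hdvd

theorem eq_zero_of_weightedMonomialMap_eq_zero [IsDomain R] {a b : ℕ}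
    (hab : a.Coprime b) {P Q : Polynomial R} (hPQ : IsCoprime P Q) (hQ : Q ≠ 0)
    {g : MvPolynomial (Fin 3) (Polynomial R)}
    (hdeg : ∀ m, (coeff m g).degree < (a * Q.natDegree : ℕ))
    (h : weightedMonomialMap a b P Q g = 0) : g = 0 := by
  by_contra hg
  obtain ⟨m, hm, hdvd⟩ := exists_pow_dvd_coeff_of_weightedMonomialMap_eq_zero hab hPQ hQ hg h
  have hle := Polynomial.degree_le_of_dvd hdvd (mem_support_iff.1 hm)
  rw [Polynomial.degree_pow, Polynomial.degree_eq_natDegree hQ, nsmul_eq_mul, ← Nat.cast_mul]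
    at hle
  exact (hdeg m).not_ge hle

theorem eq_zero_of_sum_weightedMonomialMap_mul_X_pow_eq_zero [IsDomain R] {a b N : ℕ}
    (hab : a.Coprime b) {P Q : Polynomial R} (hPQ : IsCoprime P Q) (hQ : Q ≠ 0)
    (hN : N ≤ a * Q.natDegree) {c : Fin N → MvPolynomial (Fin 3) R}
    (h : ∑ k, weightedMonomialMap a b P Q (map Polynomial.C (c k)) * C (Polynomial.X ^ k.val) = 0) :
    c = 0 := by
  set g : MvPolynomial (Fin 3) (Polynomial R) :=
    ∑ k, map Polynomial.C (c k) * C (Polynomial.X ^ k.val) with hg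
  have hcoeff (m : Fin 3 →₀ ℕ) :
      coeff m g = ∑ k, Polynomial.C (coeff m (c k)) * Polynomial.X ^ k.val := by
    rw [hg, coeff_sum]
    exact Finset.sum_congr rfl fun k _ => by rw [mul_comm, coeff_C_mul, coeff_map, mul_comm]
  have hg_zero : g = 0 := by
    refine eq_zero_of_weightedMonomialMap_eq_zero hab hPQ hQ (fun m => ?_) ?_
    · rw [hcoeff]
      exact (Polynomial.degree_sum_fin_lt _).trans_le (by exact_mod_cast hN)
    · rw [hg, map_sum, ← h]
      refine Finset.sum_congr rfl fun k _ => ?_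
      rw [map_mul, ← algebraMap_eq, AlgHom.commutes, algebraMap_eq]
  funext k
  ext m
  have hk := congrArg (Polynomial.coeff · k.val) (hcoeff m)
  simpa [hg_zero, Polynomial.finsetSum_coeff, Polynomial.coeff_X_pow, Fin.val_inj] using hk.symm

end Toric

/-- The coordinate ring `ℂ[m₀, …, m_d]`. -/
abbrev MomentRing (d : ℕ) : Type := MvPolynomial (Fin (d + 1)) ℂ

/-- The coordinate `m_k` with a natural-number index; it is `0` for `k > d`. -/
noncomputable def momentVar (d k : ℕ) : MomentRing d :=
  if h : k < d + 1 then X ⟨k, h⟩ else 0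

theorem momentVar_of_lt {d k : ℕ} (h : k < d + 1) : momentVar d k = X ⟨k, h⟩ :=
  dif_pos h

theorem momentVar_of_gt {d k : ℕ} (h : d < k) : momentVar d k = 0 :=
  dif_neg (by omega)

theorem invGaussMatrix_zero {d : ℕ} (hd : 0 < d) (r : Fin 3) :
    invGaussMatrix d r ⟨0, hd⟩ = ![momentVar d 0 ^ 2, 0, momentVar d 1 ^ 2] r := by
  rw [momentVar_of_lt (by omega), momentVar_of_lt (by omega)]
  rfl

theorem invGaussMatrix_succ {d c : ℕ} (hc : c + 1 < d) (r : Fin 3) :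
    invGaussMatrix d r ⟨c + 1, hc⟩ =
      ![momentVar d c, C (2 * (c : ℂ) + 1) * momentVar d (c + 1), momentVar d (c + 2)] r := by
  have hcoeff : 2 * ((c + 1 : ℕ) : ℂ) - 1 = 2 * c + 1 := by push_cast; ring
  rw [momentVar_of_lt (by omega), momentVar_of_lt (by omega), momentVar_of_lt (by omega), ← hcoeff]
  rfl

/-- The polynomial `p_k` with `m_k(μ, ν) = μ ^ k p_k(νμ)`; it is the Bessel polynomial `y_{k-1}`. -/
noncomputable def besselPoly : ℕ → Polynomial ℂ
  | 0 => 1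
  | 1 => 1
  | n + 2 => Polynomial.C (2 * (n : ℂ) + 1) * Polynomial.X * besselPoly (n + 1) + besselPoly n

theorem invGaussMoment_eq (μ ν : ℂ) (k : ℕ) :
    invGaussMoment μ ν k = μ ^ k * (besselPoly k).eval (ν * μ) := by
  induction k using Nat.twoStepInduction with
  | zero => simp [invGaussMoment, besselPoly]
  | one => simp [invGaussMoment, besselPoly]
  | more n ih₀ ih₁ =>
    rw [invGaussMoment, besselPoly, ih₀, ih₁]
    simp only [Polynomial.eval_add, Polynomial.eval_mul, Polynomial.eval_C, Polynomial.eval_X]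
    ring

theorem besselPoly_add_two (n : ℕ) :
    besselPoly (n + 2) =
      besselPoly n + besselPoly (n + 1) * (Polynomial.C (2 * (n : ℂ) + 1) * Polynomial.X) := by
  rw [besselPoly]
  ring

theorem isCoprime_besselPoly (k : ℕ) : IsCoprime (besselPoly k) (besselPoly (k + 1)) := by
  induction k with
  | zero => exact isCoprime_one_left
  | succ k ih =>
    rw [besselPoly_add_two]
    exact ih.symm.add_mul_left_right _

theorem degree_besselPoly_succ (k : ℕ) : (besselPoly (k + 1)).degree = k := by
  induction k using Nat.twoStepInduction with
  | zero => simp [besselPoly]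
  | one => simpa [besselPoly] using Polynomial.degree_X_add_C (1 : ℂ)
  | more n ih₀ ih₁ =>
    have hlead : (2 * ((n + 1 : ℕ) : ℂ) + 1) ≠ 0 := by norm_cast
    have hdeg : (besselPoly (n + 1 + 1) *
        (Polynomial.C (2 * ((n + 1 : ℕ) : ℂ) + 1) * Polynomial.X)).degree =
          ((n + 2 : ℕ) : WithBot ℕ) := by
      rw [Polynomial.degree_mul, Polynomial.degree_C_mul hlead, Polynomial.degree_X, ih₁]
      rfl
    rw [besselPoly_add_two, Polynomial.degree_add_eq_right_of_degree_lt, hdeg]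
    rw [hdeg, ih₀]
    exact_mod_cast (by omega : n < n + 2)

/-- The generic point of the cone in the coordinates `t`, `μ` and `x = νμ`, as the algebra map
`m_k ↦ t μ ^ k p_k(x)`. The variables `t`, `μ` are `X 0`, `X 1` and `x` lives in the
coefficients. -/
noncomputable def coneMap (d : ℕ) : MomentRing d →ₐ[ℂ] MvPolynomial (Fin 2) (Polynomial ℂ) :=
  aeval fun i => X 0 * X 1 ^ i.val * C (besselPoly i)

theorem coneMap_momentVar {d k : ℕ} (hk : k < d + 1) :
    coneMap d (momentVar d k) = X 0 * X 1 ^ k * C (besselPoly k) := by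
  simp [coneMap, momentVar_of_lt hk]

theorem coneMap_C (d : ℕ) (c : ℂ) : coneMap d (C c) = C (Polynomial.C c) := by
  rw [coneMap, algHom_C, MvPolynomial.algebraMap_apply, Polynomial.algebraMap_eq]

theorem eval_coneMap (d : ℕ) (t μ x : ℂ) (f : MomentRing d) :
    (eval ![Polynomial.C t, Polynomial.C μ] (coneMap d f)).eval x =
      eval (fun i : Fin (d + 1) => t * (μ ^ i.val * (besselPoly i).eval x)) f := by
  induction f using MvPolynomial.induction_on with
  | C c => rw [coneMap_C, eval_C, eval_C, Polynomial.eval_C]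
  | add f g hf hg => simp only [map_add, Polynomial.eval_add, hf, hg]
  | mul_X f i hf =>
    rw [map_mul, map_mul, Polynomial.eval_mul, hf, map_mul, eval_X]
    simp [coneMap, mul_assoc]

theorem coneMap_eq_zero_iff (d : ℕ) (f : MomentRing d) :
    coneMap d f = 0 ↔
      ∀ t μ ν : ℂ, eval (fun i : Fin (d + 1) => t * invGaussMoment μ ν i.val) f = 0 := by
  constructor
  · intro h t μ ν
    simp_rw [invGaussMoment_eq, ← eval_coneMap, h, map_zero, Polynomial.eval_zero]
  · intro h
    -- `μ ≠ 0` is needed to solve `x = νμ` for `ν`.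
    refine funext_set (fun _ => Polynomial.C '' {0}ᶜ) (fun _ => ?_) fun y hy => ?_
    · exact (Set.finite_singleton (0 : ℂ)).infinite_compl.image Polynomial.C_injective.injOn
    obtain ⟨t, -, ht⟩ := hy 0 trivial
    obtain ⟨μ, hμ, hμ'⟩ := hy 1 trivial
    have hy' : y = ![Polynomial.C t, Polynomial.C μ] := by
      ext i : 1
      fin_cases i
      exacts [ht.symm, hμ'.symm]
    rw [map_zero, hy']
    refine Polynomial.funext fun x => ?_
    rw [Polynomial.eval_zero, eval_coneMap, ← h t μ (x / μ)]
    simp_rw [invGaussMoment_eq, div_mul_cancel₀ x hμ]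

theorem vecMul_map_coneMap_invGaussMatrix (d : ℕ) :
    Matrix.vecMul ![X 1 ^ 2, X 1 * C Polynomial.X, -1] ((invGaussMatrix d).map (coneMap d)) =
      0 := by
  funext ⟨c, hc⟩
  rw [Matrix.vecMul, dotProduct, Fin.sum_univ_three]
  cases c with
  | zero =>
    simp only [Matrix.map_apply, invGaussMatrix_zero, Matrix.cons_val, map_pow, map_zero,
      coneMap_momentVar (show 0 < d + 1 by omega), coneMap_momentVar (show 1 < d + 1 by omega),
      besselPoly, Pi.zero_apply]
    ring
  | succ k =>
    simp only [Matrix.map_apply, invGaussMatrix_succ, Matrix.cons_val, map_mul, coneMap_C,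
      coneMap_momentVar (show k < d + 1 by omega), coneMap_momentVar (show k + 1 < d + 1 by omega),
      coneMap_momentVar (show k + 2 < d + 1 by omega), besselPoly_add_two, Pi.zero_apply]
    rw [C_add, C_mul, C_mul]
    ring

theorem invGaussIdeal_le_ker_coneMap (d : ℕ) : invGaussIdeal d ≤ RingHom.ker (coneMap d) := by
  rw [invGaussIdeal, Ideal.span_le]
  rintro _ ⟨s, -, rfl⟩
  rw [SetLike.mem_coe, RingHom.mem_ker, AlgHom.map_det, ← Matrix.exists_vecMul_eq_zero_iff]
  refine ⟨![X 1 ^ 2, X 1 * C Polynomial.X, -1], fun h => ?_, funext fun j => ?_⟩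
  · simpa using congrFun h 2
  · exact congrFun (vecMul_map_coneMap_invGaussMatrix d) (s j)

/-- The subalgebra `ℂ[m₀, m_{d-1}, m_d]`, over which the coordinate ring of the cone turns out to be
free of rank `(d - 1) ^ 2` (a Noether normalization). -/
noncomputable def parameterSubalgebra (d : ℕ) : Subalgebra ℂ (MomentRing d) :=
  Algebra.adjoin ℂ (Set.range ![momentVar d 0, momentVar d (d - 1), momentVar d d])

theorem coneMap_aeval_parameters (d : ℕ) (c : MvPolynomial (Fin 3) ℂ) :
    coneMap d (aeval ![momentVar d 0, momentVar d (d - 1), momentVar d d] c) =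
      weightedMonomialMap (d - 1) d (besselPoly (d - 1)) (besselPoly d)
        (map Polynomial.C c) := by
  induction c using MvPolynomial.induction_on with
  | C r =>
    rw [aeval_C, AlgHom.commutes, map_C, ← algebraMap_eq, AlgHom.commutes]
    rfl
  | add p q hp hq => simp only [map_add, hp, hq]
  | mul_X p i hp =>
    rw [map_mul, map_mul, hp, map_mul, map_mul, map_X, aeval_X, weightedMonomialMap, aeval_X]
    fin_cases i <;> simp [coneMap_momentVar, besselPoly, show d - 1 < d + 1 by omega]

/-- Its image under `coneMap` is `(t μ) ^ (2 (d - 1) ^ 2) x ^ k`: the powers of `x`, homogenized. -/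
noncomputable def homogenizedPow (d k : ℕ) : MomentRing d :=
  (momentVar d 0 * momentVar d 2 - momentVar d 1 ^ 2) ^ k *
    (momentVar d 1 ^ 2) ^ ((d - 1) ^ 2 - k)

theorem coneMap_homogenizedPow {d k : ℕ} (hd : 2 ≤ d) (hk : k ≤ (d - 1) ^ 2) :
    coneMap d (homogenizedPow d k) =
      (X 0 ^ 2 * X 1 ^ 2) ^ (d - 1) ^ 2 * C (Polynomial.X ^ k) := by
  have hnum : coneMap d (momentVar d 0 * momentVar d 2 - momentVar d 1 ^ 2) =
      X 0 ^ 2 * X 1 ^ 2 * C Polynomial.X := by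
    have hbessel₂ : besselPoly 2 = Polynomial.X + 1 := by simp [besselPoly]
    rw [map_sub, map_mul, map_pow, coneMap_momentVar (by omega), coneMap_momentVar (by omega),
      coneMap_momentVar (by omega), hbessel₂]
    simp only [besselPoly, C_1, C_add]
    ring
  have hden : coneMap d (momentVar d 1 ^ 2) = X 0 ^ 2 * X 1 ^ 2 := by
    rw [map_pow, coneMap_momentVar (by omega)]
    simp [besselPoly, mul_pow]
  rw [homogenizedPow, map_mul, map_pow, map_pow, hnum, hden, mul_pow, mul_right_comm, ← pow_add,
    Nat.add_sub_cancel' hk, map_pow]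

theorem exists_aeval_eq_of_mem_parameterSubalgebra {d : ℕ} {a : MomentRing d}
    (ha : a ∈ parameterSubalgebra d) :
    ∃ c : MvPolynomial (Fin 3) ℂ,
      aeval ![momentVar d 0, momentVar d (d - 1), momentVar d d] c = a := by
  rwa [parameterSubalgebra, Algebra.adjoin_range_eq_range_aeval] at ha

theorem eq_zero_of_sum_smul_homogenizedPow_mem_ker {d : ℕ} (hd : 2 ≤ d)
    (g : Fin ((d - 1) ^ 2) → parameterSubalgebra d)
    (hg : ∑ k, g k • homogenizedPow d k ∈ RingHom.ker (coneMap d)) : g = 0 := by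
  choose c hc using fun k => exists_aeval_eq_of_mem_parameterSubalgebra (g k).2
  have hsum : ∑ k, weightedMonomialMap (d - 1) d (besselPoly (d - 1)) (besselPoly d)
      (map Polynomial.C (c k)) * C (Polynomial.X ^ k.val) = 0 := by
    have hne : (X 0 ^ 2 * X 1 ^ 2 : MvPolynomial (Fin 2) (Polynomial ℂ)) ^ (d - 1) ^ 2 ≠ 0 := by
      simp [X_ne_zero]
    refine (mul_eq_zero.1 ?_).resolve_left hne
    rw [Finset.mul_sum, ← RingHom.mem_ker.1 hg, map_sum]
    refine Finset.sum_congr rfl fun k _ => ?_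
    rw [Subalgebra.smul_def, smul_eq_mul, map_mul, ← hc, coneMap_aeval_parameters,
      coneMap_homogenizedPow hd k.2.le]
    exact mul_left_comm _ _ _
  have hc_zero : c = 0 := by
    obtain ⟨n, rfl⟩ : ∃ n, d = n + 1 := ⟨d - 1, by omega⟩
    have hdeg := degree_besselPoly_succ n
    have hQ : besselPoly (n + 1) ≠ 0 := fun h => by simp [h] at hdeg
    refine eq_zero_of_sum_weightedMonomialMap_mul_X_pow_eq_zero
      (Nat.coprime_self_add_right.2 (Nat.coprime_one_right n)) (isCoprime_besselPoly n) hQ ?_ hsum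
    rw [Polynomial.natDegree_eq_of_degree_eq_some hdeg, Nat.add_sub_cancel, sq]
  funext k
  ext1
  rw [← hc k, hc_zero, Pi.zero_apply, map_zero]
  rfl

section Straightening

variable {d : ℕ} {s t : Multiset ℕ}

/-- The monomial `∏ m_k` over a multiset of indices. -/
noncomputable def momentMonomial (d : ℕ) (s : Multiset ℕ) : MomentRing d :=
  (s.map (momentVar d)).prod

theorem momentMonomial_zero (d : ℕ) : momentMonomial d 0 = 1 := by
  simp [momentMonomial]

theorem momentMonomial_cons (d k : ℕ) (s : Multiset ℕ) :
    momentMonomial d (k ::ₘ s) = momentVar d k * momentMonomial d s := by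
  simp [momentMonomial]

theorem momentMonomial_singleton (d k : ℕ) : momentMonomial d {k} = momentVar d k := by
  simp [momentMonomial]

theorem momentMonomial_add (d : ℕ) (s t : Multiset ℕ) :
    momentMonomial d (s + t) = momentMonomial d s * momentMonomial d t := by
  simp [momentMonomial]

theorem momentMonomial_eq_zero (h : ∃ k ∈ s, d < k) : momentMonomial d s = 0 := by
  obtain ⟨k, hk, hdk⟩ := h
  exact Multiset.prod_eq_zero (Multiset.mem_map.2 ⟨k, hk, momentVar_of_gt hdk⟩)

theorem span_range_momentMonomial (d : ℕ) :
    Submodule.span ℂ (Set.range (momentMonomial d)) = ⊤ := by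
  rw [eq_top_iff]
  intro f _
  induction f using MvPolynomial.induction_on with
  | C c =>
    rw [← mul_one (C c), ← momentMonomial_zero d, ← smul_eq_C_mul]
    exact Submodule.smul_mem _ c (Submodule.subset_span ⟨0, rfl⟩)
  | add f g hf hg => exact add_mem (hf trivial) (hg trivial)
  | mul_X f i hf =>
    have hle : Submodule.span ℂ (Set.range (momentMonomial d)) ≤
        (Submodule.span ℂ (Set.range (momentMonomial d))).comap (LinearMap.mulRight ℂ (X i)) := by
      rw [Submodule.span_le]
      rintro _ ⟨s, rfl⟩
      refine Submodule.subset_span ⟨i.val ::ₘ s, ?_⟩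
      rw [momentMonomial_cons, momentVar_of_lt i.2, mul_comm]
      rfl
    exact hle (hf trivial)

/-- The sum of the squares of the indices, which measures how far they are spread apart. -/
def spread (s : Multiset ℕ) : ℕ :=
  (s.map (· ^ 2)).sum

theorem spread_add (s t : Multiset ℕ) : spread (s + t) = spread s + spread t := by
  simp [spread]

theorem spread_le (h : ∀ k ∈ s, k ≤ d) : spread s ≤ s.card * d ^ 2 := by
  have hle := Multiset.sum_le_card_nsmul (s.map (· ^ 2)) (d ^ 2) fun x hx => by
    obtain ⟨k, hk, rfl⟩ := Multiset.mem_map.1 hx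
    exact Nat.pow_le_pow_left (h k hk) 2
  simpa [spread] using hle

/-- Modulo the determinantal ideal, the monomial of `s` is a linear combination of monomials of the
same degree and larger spread. -/
def IsStraightenable (d : ℕ) (s : Multiset ℕ) : Prop :=
  momentMonomial d s ∈ (invGaussIdeal d).restrictScalars ℂ ⊔
    Submodule.span ℂ (momentMonomial d '' {t | t.card = s.card ∧ spread s < spread t})

theorem IsStraightenable.mono (hs : IsStraightenable d s) (hst : s ≤ t) : IsStraightenable d t := by
  obtain ⟨r, rfl⟩ := Multiset.le_iff_exists_add.1 hst
  rw [IsStraightenable, momentMonomial_add]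
  suffices hle : (invGaussIdeal d).restrictScalars ℂ ⊔
      Submodule.span ℂ (momentMonomial d '' {t | t.card = s.card ∧ spread s < spread t}) ≤
      ((invGaussIdeal d).restrictScalars ℂ ⊔ Submodule.span ℂ (momentMonomial d ''
        {t | t.card = (s + r).card ∧ spread (s + r) < spread t})).comap
          (LinearMap.mulRight ℂ (momentMonomial d r)) from hle hs
  refine sup_le (fun f hf => Submodule.mem_sup_left (Ideal.mul_mem_right _ _ hf)) ?_
  rw [Submodule.span_le]
  rintro _ ⟨t, ⟨hcard, hspread⟩, rfl⟩
  refine Submodule.mem_sup_right (Submodule.subset_span ⟨t + r, ⟨?_, ?_⟩, momentMonomial_add d t r⟩)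
  · rw [Multiset.card_add, Multiset.card_add, hcard]
  · rw [spread_add, spread_add]
    omega

theorem eq_top_of_isStraightenable_or_mem {N : Submodule ℂ (MomentRing d)}
    (hI : (invGaussIdeal d).restrictScalars ℂ ≤ N)
    (h : ∀ s : Multiset ℕ, (∀ k ∈ s, k ≤ d) → IsStraightenable d s ∨ momentMonomial d s ∈ N) :
    N = ⊤ := by
  suffices hmem : ∀ s, momentMonomial d s ∈ N by
    rw [eq_top_iff, ← span_range_momentMonomial, Submodule.span_le]
    rintro _ ⟨s, rfl⟩
    exact hmem s
  intro s
  induction hn : s.card * d ^ 2 - spread s using Nat.strong_induction_on generalizing s with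
  | _ n ih =>
    subst hn
    by_cases hs : ∀ k ∈ s, k ≤ d
    · refine (h s hs).elim (fun hstraight => sup_le hI ?_ hstraight) id
      rw [Submodule.span_le]
      rintro _ ⟨t, ⟨hcard, hspread⟩, rfl⟩
      by_cases ht : ∀ k ∈ t, k ≤ d
      · have hle := spread_le ht
        refine ih _ ?_ t rfl
        rw [hcard] at hle ⊢
        omega
      · rw [momentMonomial_eq_zero (by simpa using ht)]
        exact zero_mem N
    · rw [momentMonomial_eq_zero (by simpa using hs)]
      exact zero_mem N

theorem minor_mem_invGaussIdeal {i j k : Fin d} (hij : i < j) (hjk : j < k) :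
    ((invGaussMatrix d).submatrix id ![i, j, k]).det ∈ invGaussIdeal d :=
  Ideal.subset_span ⟨_, by simp [hij, hjk], rfl⟩

theorem isStraightenable_of_C_mul_sub_sum_mem {ι : Type*} [Fintype ι] {c : ℂ} {a : ι → ℂ}
    {t : ι → Multiset ℕ} (hc : c ≠ 0) (hcard : ∀ i, (t i).card = s.card)
    (hspread : ∀ i, spread s < spread (t i))
    (h : C c * momentMonomial d s - ∑ i, C (a i) * momentMonomial d (t i) ∈ invGaussIdeal d) :
    IsStraightenable d s := by
  rw [IsStraightenable, ← Submodule.smul_mem_iff _ hc, smul_eq_C_mul,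
    ← sub_add_cancel (C c * _) (∑ i, C (a i) * momentMonomial d (t i))]
  refine Submodule.add_mem_sup h (Submodule.sum_mem _ fun i _ => ?_)
  rw [← smul_eq_C_mul]
  exact Submodule.smul_mem _ _ (Submodule.subset_span ⟨t i, ⟨hcard i, hspread i⟩, rfl⟩)

theorem isStraightenable_triple_of_lt {a b c : ℕ} (hab : a < b) (hbc : b < c) (hc : c + 1 < d) :
    IsStraightenable d {a + 2, b + 1, c} := by
  have hb : 2 * (b : ℂ) + 1 ≠ 0 := by norm_cast
  have hminor := minor_mem_invGaussIdeal (d := d) (i := ⟨a + 1, by omega⟩) (j := ⟨b + 1, by omega⟩)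
    (k := ⟨c + 1, hc⟩) (by simpa using hab) (by simpa using hbc)
  -- As `a < b < c`, the term of least spread of this minor is `(2b + 1) m_{a+2} m_{b+1} m_c`.
  refine isStraightenable_of_C_mul_sub_sum_mem
    (a := ![2 * b + 1, -(2 * c + 1), -(2 * a + 1), 2 * c + 1, 2 * a + 1])
    (t := ![{a, b + 1, c + 2}, {a, b + 2, c + 1}, {a + 1, b, c + 2}, {a + 2, b, c + 1},
      {a + 1, b + 2, c}]) hb ?_ ?_ ?_
  · simp [Fin.forall_fin_succ]
  · intro i
    fin_cases i <;> simp [spread] <;> nlinarith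
  · rw [Matrix.det_fin_three] at hminor
    simp only [Matrix.submatrix_apply, id, Matrix.cons_val, invGaussMatrix_succ] at hminor
    rw [← neg_mem_iff]
    convert hminor using 1
    simp only [Fin.sum_univ_five, Matrix.cons_val, Multiset.insert_eq_cons, momentMonomial_cons,
      momentMonomial_singleton, C_neg]
    ring

theorem isStraightenable_one_one_pair_of_lt {b c : ℕ} (hbc : b < c) (hc : c + 1 < d) :
    IsStraightenable d {1, 1, b + 1, c} := by
  have hb : 2 * (b : ℂ) + 1 ≠ 0 := by norm_cast
  have hminor := minor_mem_invGaussIdeal (d := d) (i := ⟨0, by omega⟩) (j := ⟨b + 1, by omega⟩)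
    (k := ⟨c + 1, hc⟩) (by simp) (by simpa using hbc)
  refine isStraightenable_of_C_mul_sub_sum_mem
    (a := ![2 * b + 1, -(2 * c + 1), 2 * c + 1])
    (t := ![{0, 0, b + 1, c + 2}, {0, 0, b + 2, c + 1}, {1, 1, b, c + 1}])
    hb ?_ ?_ ?_
  · simp [Fin.forall_fin_succ]
  · intro i
    fin_cases i <;> simp [spread] <;> nlinarith
  · rw [Matrix.det_fin_three] at hminor
    simp only [Matrix.submatrix_apply, id, Matrix.cons_val, invGaussMatrix_zero,
      invGaussMatrix_succ] at hminor
    rw [← neg_mem_iff]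
    convert hminor using 1
    simp only [Fin.sum_univ_three, Matrix.cons_val, Multiset.insert_eq_cons, momentMonomial_cons,
      momentMonomial_singleton, C_neg]
    ring

theorem isStraightenable_of_card_eq_three (hcard : s.card = 3)
    (hs : ∀ k ∈ s, k ∈ Finset.Icc 2 (d - 2)) : IsStraightenable d s := by
  obtain ⟨i, j, k, hsort⟩ := List.length_eq_three.1 ((s.length_sort (· ≤ ·)).trans hcard)
  have hsorted := s.pairwise_sort (· ≤ ·)
  rw [hsort, List.pairwise_cons, List.pairwise_pair] at hsorted
  rw [← s.sort_eq (· ≤ ·), hsort] at hs ⊢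
  have hij : i ≤ j := hsorted.1 j (by simp)
  have hjk : j ≤ k := hsorted.2
  have hi := Finset.mem_Icc.1 (hs i (by simp))
  have hk := Finset.mem_Icc.1 (hs k (by simp))
  have h := isStraightenable_triple_of_lt (d := d) (a := i - 2) (b := j - 1) (c := k) (by omega)
    (Nat.sub_one_lt_of_le (by omega) hjk) (by omega)
  rwa [Nat.sub_add_cancel hi.1, Nat.sub_add_cancel (by omega)] at h

theorem isStraightenable_one_one_pair {j k : ℕ} (hj : j ∈ Finset.Icc 1 (d - 2))
    (hk : k ∈ Finset.Icc 1 (d - 2)) : IsStraightenable d {1, 1, j, k} := by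
  wlog hjk : j ≤ k generalizing j k
  · rw [Multiset.pair_comm j k]
    exact this hk hj (by omega)
  rw [Finset.mem_Icc] at hj hk
  have h := isStraightenable_one_one_pair_of_lt (d := d) (b := j - 1) (c := k)
    (Nat.sub_one_lt_of_le hj.1 hjk) (by omega)
  rwa [Nat.sub_add_cancel hj.1] at h

theorem card_le_two_of_not_isStraightenable
    (hs : ∀ k ∈ s, k ∈ Finset.Icc 2 (d - 2)) (h : ¬ IsStraightenable d s) : s.card ≤ 2 := by
  contrapose! h
  obtain ⟨t, hts, ht⟩ := exists_le_card_eq (Nat.succ_le_of_lt h)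
  exact (isStraightenable_of_card_eq_three ht fun k hk =>
    hs k (Multiset.mem_of_le hts hk)).mono hts

theorem card_le_one_of_not_isStraightenable
    (hs : ∀ k ∈ s, k ∈ Finset.Icc 1 (d - 2)) (h : ¬ IsStraightenable d ({1, 1} + s)) :
    s.card ≤ 1 := by
  contrapose! h
  obtain ⟨t, hts, ht⟩ := exists_le_card_eq (Nat.succ_le_of_lt h)
  obtain ⟨j, k, rfl⟩ := Multiset.card_eq_two.1 ht
  refine (isStraightenable_one_one_pair (hs j ?_) (hs k ?_)).mono (Multiset.add_le_add_left hts)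
  all_goals exact Multiset.mem_of_le hts (by simp)

/-- The standard monomials `m₁ ^ e m_i m_j` and `m₁ ^ 2 m_k` with `e ≤ 1`, `2 ≤ i ≤ j ≤ d - 2` and
`1 ≤ k ≤ d - 2`, which generate `ℂ[m₀, …, m_d] / I₃(H)` over `parameterSubalgebra d`. The index
`none` stands for an absent factor `m_i`, `m_j` or `m_k`. -/
noncomputable def standardMonomial (d : ℕ) :
    Fin 2 × Sym2 (Option (Finset.Icc 2 (d - 2))) ⊕ Option (Finset.Icc 1 (d - 2)) → MomentRing d
  | .inl (e, z) => momentVar d 1 ^ e.val * (z.map (·.elim 1 (momentVar d ·))).mul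
  | .inr o => momentVar d 1 ^ 2 * o.elim 1 (momentVar d ·)

theorem card_standardMonomial_index (hd : 3 ≤ d) :
    Fintype.card (Fin 2 × Sym2 (Option (Finset.Icc 2 (d - 2))) ⊕ Option (Finset.Icc 1 (d - 2))) =
      (d - 1) ^ 2 := by
  obtain ⟨n, rfl⟩ := Nat.exists_eq_add_of_le' hd
  have hpairs : 2 * (n + 2).choose 2 = (n + 2) * (n + 1) := by
    rw [Nat.choose_two_right, Nat.mul_div_cancel' (Nat.even_mul_pred_self _).two_dvd]
    rfl
  have hIcc₂ : Fintype.card (Finset.Icc 2 (n + 3 - 2)) = n := by simp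
  have hIcc₁ : Fintype.card (Finset.Icc 1 (n + 3 - 2)) = n + 1 := by simp
  rw [Fintype.card_sum, Fintype.card_prod, Fintype.card_fin, Sym2.card, Fintype.card_option,
    Fintype.card_option, hIcc₂, hIcc₁, hpairs, show n + 3 - 1 = n + 2 from rfl]
  ring

theorem momentMonomial_one_one_add_mem_range_standardMonomial
    (hs : ∀ k ∈ s, k ∈ Finset.Icc 1 (d - 2)) (hcard : s.card ≤ 1) :
    momentMonomial d ({1, 1} + s) ∈ Set.range (standardMonomial d) := by
  lift s to Multiset (Finset.Icc 1 (d - 2)) using hs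
  rw [Multiset.card_map] at hcard
  obtain ⟨o, ho⟩ := exists_option_elim_eq_prod_map (momentVar d ·.val) hcard
  exact ⟨.inr o, by simp [standardMonomial, ho, momentMonomial, sq, mul_assoc]⟩

theorem momentMonomial_replicate_add_mem_range_standardMonomial {e : ℕ}
    (he : e < 2) (hs : ∀ k ∈ s, k ∈ Finset.Icc 2 (d - 2)) (hcard : s.card ≤ 2) :
    momentMonomial d (Multiset.replicate e 1 + s) ∈ Set.range (standardMonomial d) := by
  lift s to Multiset (Finset.Icc 2 (d - 2)) using hs
  rw [Multiset.card_map] at hcard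
  obtain ⟨z, hz⟩ := exists_sym2_mul_eq_prod_map (momentVar d ·.val) hcard
  exact ⟨.inl (⟨e, he⟩, z), by simp [standardMonomial, hz, momentMonomial]⟩

theorem momentMonomial_mem_range_standardMonomial
    (hs : ∀ k ∈ s, k ∈ Finset.Icc 1 (d - 2)) (h : ¬ IsStraightenable d s) :
    momentMonomial d s ∈ Set.range (standardMonomial d) := by
  by_cases hcount : 2 ≤ s.count 1
  · obtain ⟨q, rfl⟩ := Multiset.le_iff_exists_add.1 (Multiset.le_count_iff_replicate_le.1 hcount)
    have hq : ∀ k ∈ q, k ∈ Finset.Icc 1 (d - 2) := fun k hk => hs k (Multiset.mem_add.2 (.inr hk))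
    exact momentMonomial_one_one_add_mem_range_standardMonomial hq
      (card_le_one_of_not_isStraightenable hq h)
  · rw [← Multiset.filter_add_not (· = 1) s, Multiset.filter_eq'] at h ⊢
    have hq : ∀ k ∈ s.filter (¬ · = 1), k ∈ Finset.Icc 2 (d - 2) := fun k hk => by
      obtain ⟨hks, hk1⟩ := Multiset.mem_filter.1 hk
      have hk_Icc := Finset.mem_Icc.1 (hs k hks)
      exact Finset.mem_Icc.2 ⟨by omega, hk_Icc.2⟩
    exact momentMonomial_replicate_add_mem_range_standardMonomial (not_le.1 hcount) hq
      (card_le_two_of_not_isStraightenable hq (mt (·.mono (Multiset.le_add_left _ _)) h))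

theorem momentMonomial_mem_parameterSubalgebra
    (hs : ∀ k ∈ s, k ≤ d ∧ k ∉ Finset.Icc 1 (d - 2)) :
    momentMonomial d s ∈ parameterSubalgebra d := by
  refine Subalgebra.multiset_prod_mem _ fun x hx => ?_
  obtain ⟨k, hk, rfl⟩ := Multiset.mem_map.1 hx
  refine Algebra.subset_adjoin ?_
  obtain ⟨hkd, hk⟩ := hs k hk
  rw [Finset.mem_Icc] at hk
  obtain rfl | rfl | rfl : k = 0 ∨ k = d - 1 ∨ k = d := by omega
  exacts [⟨0, rfl⟩, ⟨1, rfl⟩, ⟨2, rfl⟩]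

end Straightening

theorem span_range_standardMonomial_sup_eq_top (d : ℕ) :
    Submodule.span (parameterSubalgebra d) (Set.range (standardMonomial d)) ⊔
      (invGaussIdeal d).restrictScalars (parameterSubalgebra d) = ⊤ := by
  set N := Submodule.span (parameterSubalgebra d) (Set.range (standardMonomial d)) ⊔
    (invGaussIdeal d).restrictScalars (parameterSubalgebra d)
  suffices h : N.restrictScalars ℂ = ⊤ from (Submodule.restrictScalars_eq_top_iff ..).1 h
  have hI : (invGaussIdeal d).restrictScalars ℂ ≤ N.restrictScalars ℂ :=
    fun f hf => Submodule.mem_sup_right hf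
  refine eq_top_of_isStraightenable_or_mem hI fun s hs => or_iff_not_imp_left.2 fun hstr => ?_
  rw [← Multiset.filter_add_not (· ∈ Finset.Icc 1 (d - 2)) s] at hstr ⊢
  have hstd := momentMonomial_mem_range_standardMonomial
    (fun k hk => (Multiset.mem_filter.1 hk).2) (mt (·.mono (Multiset.le_add_right _ _)) hstr)
  have hparam : momentMonomial d (s.filter (· ∉ Finset.Icc 1 (d - 2))) ∈ parameterSubalgebra d :=
    momentMonomial_mem_parameterSubalgebra fun k hk =>
      (Multiset.mem_filter.1 hk).imp_left (hs k)
  rw [momentMonomial_add, mul_comm]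
  exact Submodule.mem_sup_left
    (Submodule.smul_mem _ (⟨_, hparam⟩ : parameterSubalgebra d) (Submodule.subset_span hstd))

theorem invGaussIdeal_eq_ker_coneMap {d : ℕ} (hd : 3 ≤ d) :
    invGaussIdeal d = RingHom.ker (coneMap d) := by
  refine Submodule.restrictScalars_injective (parameterSubalgebra d) _ _ ?_
  refine eq_of_span_sup_eq_top_of_card_le (span_range_standardMonomial_sup_eq_top d)
    (e := fun k : Fin ((d - 1) ^ 2) => homogenizedPow d k)
    (eq_zero_of_sum_smul_homogenizedPow_mem_ker (by omega)) ?_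
    (invGaussIdeal_le_ker_coneMap d)
  rw [card_standardMonomial_index hd, Fintype.card_fin]

end InvGauss

/-- For `d ≥ 3`, a polynomial vanishes on the affine cone over the inverse Gaussian moment
parameterization iff it lies in the determinantal ideal `I₃(H)`. -/
theorem invGauss_vanishingIdeal (d : ℕ) (hd : 3 ≤ d) (f : MvPolynomial (Fin (d + 1)) ℂ) :
    (∀ t μ ν : ℂ, eval (fun i : Fin (d + 1) => t * invGaussMoment μ ν i.val) f = 0) ↔
      f ∈ invGaussIdeal d := by
  rw [← InvGauss.coneMap_eq_zero_iff, InvGauss.invGaussIdeal_eq_ker_coneMap hd, RingHom.mem_ker]
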